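/- Let f be a smooth cubic form in four variables over 𝔽₂. If the stabilizer subgroup {g ∈ GL₄(𝔽₂) : f ∘ g = f} has order exactly 720, then this stabilizer is isomorphic to the symmetric group S₆. -/

import Mathlib

open MvPolynomial

noncomputable section

/-- The field with two elements. -/
abbrev F2 : Type := ZMod 2

/-- An algebraic closure of `F2`. -/
abbrev Kbar : Type := AlgebraicClosure F2

/-- Linear substitution action of a matrix `g` on a polynomial `f`:
`(act g f)(x) = f (g * x)`, i.e. the variable `X i` is replaced by `∑ j, g i j • X j`. -/
def act (g : Matrix (Fin 4) (Fin 4) F2) (f : MvPolynomial (Fin 4) F2) :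
    MvPolynomial (Fin 4) F2 :=
  aeval (fun i => ∑ j, g i j • X j) f

lemma act_one (f : MvPolynomial (Fin 4) F2) : act 1 f = f := by
  have h : (fun i => ∑ j, (1 : Matrix (Fin 4) (Fin 4) F2) i j • (X j : MvPolynomial (Fin 4) F2))
      = X := by
    funext i
    simp [Matrix.one_apply, ite_smul]
  simp [act, h]

lemma act_act (g h : Matrix (Fin 4) (Fin 4) F2) (f : MvPolynomial (Fin 4) F2) :
    act g (act h f) = act (h * g) f := by
  show (aeval _) ((aeval _) f) = _
  rw [← AlgHom.comp_apply, comp_aeval]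
  have key : (fun i => (aeval fun i => ∑ j, g i j • (X j : MvPolynomial (Fin 4) F2))
        (∑ j, h i j • (X j : MvPolynomial (Fin 4) F2)))
      = fun i => ∑ j, (h * g) i j • (X j : MvPolynomial (Fin 4) F2) := by
    funext i
    simp only [map_sum, map_smul, aeval_X, Matrix.mul_apply, Finset.smul_sum, smul_smul,
      Finset.sum_smul]
    rw [Finset.sum_comm]
  rw [key]
  rfl

/-- The stabilizer of a polynomial `f` under the linear-substitution action of `GL₄(𝔽₂)`. -/
def stab (f : MvPolynomial (Fin 4) F2) : Subgroup (GL (Fin 4) F2) where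
  carrier := {g | act (g : Matrix (Fin 4) (Fin 4) F2) f = f}
  one_mem' := by simpa using act_one f
  mul_mem' := by
    intro a b ha hb
    simp only [Set.mem_setOf_eq] at *
    have : act ((↑(a * b) : Matrix (Fin 4) (Fin 4) F2)) f = act ↑b (act ↑a f) := by
      rw [act_act]; rfl
    rw [this, ha, hb]
  inv_mem' := by
    intro a ha
    simp only [Set.mem_setOf_eq] at *
    have h2 := congrArg (act ((↑(a⁻¹) : Matrix (Fin 4) (Fin 4) F2))) ha
    rw [act_act] at h2
    rw [Units.mul_inv, act_one] at h2
    exact h2.symm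

/-- A smooth cubic form over `𝔽₂`: homogeneous of degree `3`, such that over an algebraic
closure the only common zero of `f` and its four partial derivatives is the origin. -/
def IsSmoothCubic (f : MvPolynomial (Fin 4) F2) : Prop :=
  f.IsHomogeneous 3 ∧
    ∀ v : Fin 4 → Kbar,
      eval v (map (algebraMap F2 Kbar) f) = 0 →
      (∀ i : Fin 4, eval v (map (algebraMap F2 Kbar) (pderiv i f)) = 0) →
      v = 0

/-- The cubic form `x²t + y²z + yz² + xt²`. -/
def c0 : MvPolynomial (Fin 4) F2 :=
  X 0 ^ 2 * X 3 + X 1 ^ 2 * X 2 + X 1 * X 2 ^ 2 + X 0 * X 3 ^ 2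

/-!
By Cauchy's and Sylow's theorems, `f` may be replaced by an equivalent form that is invariant
under one fixed matrix `G` of order five. The vector `∑ v, f v • v` is then fixed by `G`, hence
zero, and its coordinates are exactly the coefficients of the squarefree monomials of `f`. So
`f x = b (x, x²)` for a `G`-invariant bilinear form `b`.

Fix a nondegenerate `G`-invariant alternating form `ω`, so that `b (x, y) = ω (x, B y)` with `B`
in the centralizer of `G`, a field with sixteen elements. The case `B = 0` is excluded by the order
of the stabilizer; otherwise `B ^ 3` is a power of `G`. The asymmetry of `b` is measured by
`B ^ 3`, so every isometry of `b` commutes with it. If `B ^ 3 ≠ 1`, the stabilizer lies in the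
centralizer of `G` and is too small. If `B ^ 3 = 1`, rescaling by `B ^ 2` reduces to `b = ω`, whose
isometry group contains `S₆` acting on the sum-zero vectors of `𝔽₂⁶` modulo the all-one vector.
-/

section FiniteFieldSums

variable {K : Type*} [Field K] [Fintype K]

lemma sum_pow_card_sub_one : ∑ x : K, x ^ (Fintype.card K - 1) = -1 := by
  classical
  have hq : Fintype.card K - 1 ≠ 0 := (Nat.sub_pos_of_lt Fintype.one_lt_card).ne'
  have hpow (x : K) : x ^ (Fintype.card K - 1) = 1 - if x = 0 then 1 else 0 := by
    split_ifs with hx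
    · rw [hx, zero_pow hq, sub_self]
    · rw [FiniteField.pow_card_sub_one_eq_one x hx, sub_zero]
  simp [hpow]

lemma sum_eval_eq_neg_one_pow_mul_coeff {σ : Type*} [Fintype σ] [DecidableEq σ]
    (f : MvPolynomial σ K) (hf : f.totalDegree ≤ (Fintype.card K - 1) * Fintype.card σ) :
    ∑ v : σ → K, eval v f = (-1) ^ Fintype.card σ *
      coeff (Finsupp.equivFunOnFinite.symm fun _ => Fintype.card K - 1) f := by
  set top : σ →₀ ℕ := Finsupp.equivFunOnFinite.symm fun _ => Fintype.card K - 1 with htop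
  have hsmall {d : σ →₀ ℕ} (hd : d ∈ f.support) (hne : d ≠ top) :
      ∃ i, d i < Fintype.card K - 1 := by
    by_contra! hge
    have hdeg : ∑ i, d i ≤ ∑ _i : σ, (Fintype.card K - 1) := by
      rw [← Finsupp.sum_fintype d (fun _ e => e) fun _ => rfl]
      simpa [mul_comm] using (le_totalDegree hd).trans hf
    have heq := (Finset.sum_eq_sum_iff_of_le fun i _ => hge i).1
      (le_antisymm (Finset.sum_le_sum fun i _ => hge i) hdeg)
    exact hne (Finsupp.ext fun i => (heq i (Finset.mem_univ i)).symm)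
  calc ∑ v : σ → K, eval v f
      = ∑ d ∈ f.support, coeff d f * ∏ i, ∑ x : K, x ^ d i := by
        simp only [eval_eq', Finset.prod_univ_sum, Fintype.piFinset_univ, Finset.mul_sum]
        exact Finset.sum_comm
    _ = coeff top f * ∏ i, ∑ x : K, x ^ top i := by
        refine Finset.sum_eq_single top (fun d hd hne => ?_) fun hd => ?_
        · obtain ⟨i, hi⟩ := hsmall hd hne
          rw [Finset.prod_eq_zero (Finset.mem_univ i)
            (FiniteField.sum_pow_lt_card_sub_one K _ hi), mul_zero]
        · rw [notMem_support_iff.1 hd, zero_mul]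
    _ = (-1) ^ Fintype.card σ * coeff top f := by
        simp [htop, sum_pow_card_sub_one, mul_comm]

end FiniteFieldSums

section FrobeniusForms

variable {σ R : Type*} [CommSemiring R]

lemma single_add_single_two_injective {i j k l : σ}
    (h : Finsupp.single k 1 + Finsupp.single l 2 = Finsupp.single i 1 + Finsupp.single j 2) :
    k = i ∧ l = j := by
  classical
  have hk : k = i := by
    have hval := DFunLike.congr_fun h k
    simp only [Finsupp.add_apply, Finsupp.single_apply, if_true] at hval
    by_contra hki
    split_ifs at hval <;> simp_all
  subst hk
  exact ⟨rfl, (Finsupp.single_left_inj two_ne_zero).1 (add_left_cancel h)⟩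

lemma X_mul_X_sq_eq_monomial (i j : σ) :
    (X i * X j ^ 2 : MvPolynomial σ R) =
      monomial (Finsupp.single i 1 + Finsupp.single j 2) 1 := by
  rw [X_pow_eq_monomial, X, monomial_mul, one_mul]

variable [Fintype σ]

/-- The cubic form `∑ i j, A i j • X i * X j ^ 2`, that is `x ↦ B (x, F x)` for the bilinear form
`B` with Gram matrix `A` and the coordinatewise squaring map `F`. Over a field of
characteristic two these are the cubic Frobenius forms. -/
def frobeniusForm : Matrix σ σ R →ₗ[R] MvPolynomial σ R :=
  ∑ i, ∑ j, (Matrix.entryLinearMap R R i j).smulRight (X i * X j ^ 2)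

lemma frobeniusForm_apply (A : Matrix σ σ R) :
    frobeniusForm A = ∑ i, ∑ j, A i j • (X i * X j ^ 2) := by
  simp [frobeniusForm]

lemma frobeniusForm_eq_dotProduct (A : Matrix σ σ R) :
    frobeniusForm A = X ⬝ᵥ (A.map C).mulVec fun j => X j ^ 2 := by
  simp only [frobeniusForm_apply, dotProduct, Matrix.mulVec, Matrix.map_apply, Finset.mul_sum,
    smul_eq_C_mul]
  exact Finset.sum_congr rfl fun i _ => Finset.sum_congr rfl fun j _ => by ring

lemma coeff_frobeniusForm (A : Matrix σ σ R) (i j : σ) :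
    coeff (Finsupp.single i 1 + Finsupp.single j 2) (frobeniusForm A) = A i j := by
  classical
  have hexp (k l : σ) : Finsupp.single k 1 + Finsupp.single l 2 =
      Finsupp.single i 1 + Finsupp.single j 2 ↔ k = i ∧ l = j :=
    ⟨single_add_single_two_injective, by rintro ⟨rfl, rfl⟩; rfl⟩
  simp [frobeniusForm_apply, coeff_sum, X_mul_X_sq_eq_monomial, coeff_monomial, hexp, ite_and]

lemma frobeniusForm_injective :
    Function.Injective (frobeniusForm : Matrix σ σ R → MvPolynomial σ R) := fun A B h => by
  ext i j
  rw [← coeff_frobeniusForm A, h, coeff_frobeniusForm]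

lemma mem_range_frobeniusForm {f : MvPolynomial σ R}
    (hf : ∀ d ∈ f.support, ∃ i j, d = Finsupp.single i 1 + Finsupp.single j 2) :
    f ∈ LinearMap.range (frobeniusForm : Matrix σ σ R →ₗ[R] MvPolynomial σ R) := by
  classical
  rw [f.as_sum]
  refine Submodule.sum_mem _ fun d hd => ?_
  obtain ⟨i, j, rfl⟩ := hf d hd
  refine ⟨Matrix.single i j (coeff (Finsupp.single i 1 + Finsupp.single j 2) f), ?_⟩
  simp [frobeniusForm_apply, Matrix.single_apply, ite_and, X_mul_X_sq_eq_monomial,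
    smul_monomial]

lemma aeval_frobeniusForm [CharP R 2] (h A : Matrix σ σ R) :
    aeval (fun i => ∑ j, h i j • (X j : MvPolynomial σ R)) (frobeniusForm A) =
      frobeniusForm (h.transpose * A * h.map (frobenius R 2)) := by
  have hlin : (fun i => ∑ j, h i j • (X j : MvPolynomial σ R)) = (h.map C).mulVec X := by
    ext1 i
    simp [Matrix.mulVec, dotProduct, smul_eq_C_mul]
  have hsq : (fun j => (h.map C).mulVec (X : σ → MvPolynomial σ R) j ^ 2) =
      ((h.map (frobenius R 2)).map C).mulVec fun j => X j ^ 2 := by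
    ext1 j
    simp [Matrix.mulVec, dotProduct, sum_pow_char, mul_pow, frobenius_def]
  calc aeval (fun i => ∑ j, h i j • (X j : MvPolynomial σ R)) (frobeniusForm A)
      = (h.map C).mulVec X ⬝ᵥ (A.map C).mulVec fun j => (h.map C).mulVec X j ^ 2 := by
        rw [hlin]
        simp [frobeniusForm_apply, dotProduct, Matrix.mulVec, Finset.mul_sum,
          smul_eq_C_mul, mul_left_comm]
    _ = frobeniusForm (h.transpose * A * h.map (frobenius R 2)) := by
        rw [hsq, frobeniusForm_eq_dotProduct, Matrix.map_mul, Matrix.map_mul,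
          Matrix.transpose_map, ← Matrix.mulVec_mulVec, ← Matrix.mulVec_mulVec,
          Matrix.dotProduct_mulVec X, Matrix.vecMul_transpose]

end FrobeniusForms

section Exponents

variable {σ : Type*} [Fintype σ]

lemma exists_eq_single_add_single_two_or_add_single_eq_one {d : σ →₀ ℕ} (hd : d.degree = 3)
    (hσ : Fintype.card σ = 4) :
    (∃ i j, d = Finsupp.single i 1 + Finsupp.single j 2) ∨
      ∃ l, d + Finsupp.single l 1 = Finsupp.equivFunOnFinite.symm fun _ => 1 := by
  by_cases hsq : ∃ j, 2 ≤ d j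
  · obtain ⟨j, hj⟩ := hsq
    have hle : Finsupp.single j 2 ≤ d := Finsupp.single_le_iff.2 hj
    have hsub := tsub_add_cancel_of_le hle
    obtain ⟨i, hi⟩ := (Finsupp.sum_eq_one_iff (d - Finsupp.single j 2)).1 (by
      have := congrArg Finsupp.degree hsub
      rw [map_add, Finsupp.degree_single, hd] at this
      exact Nat.add_right_cancel this)
    exact .inl ⟨i, j, by rw [← hi, hsub]⟩
  · push Not at hsq
    set e : σ →₀ ℕ := Finsupp.equivFunOnFinite.symm fun _ => 1 with he
    have hle : d ≤ e := fun i => Nat.le_of_lt_succ (hsq i)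
    have hsub := add_tsub_cancel_of_le hle
    obtain ⟨l, hl⟩ := (Finsupp.sum_eq_one_iff (e - d)).1 (by
      have := congrArg Finsupp.degree hsub
      have hdeg : e.degree = 4 := by simp [he, Finsupp.degree_eq_sum, hσ]
      rw [map_add, hd, hdeg] at this
      exact Nat.add_left_cancel (n := 3) this)
    exact .inr ⟨l, by rw [← hl, hsub]⟩

end Exponents

section Sylow

open scoped Pointwise

lemma exists_conj_mem_of_prime_dvd_card {Γ : Type*} [Group Γ] [Finite Γ] {p : ℕ} [Fact p.Prime]
    (hΓ : ¬ p ^ 2 ∣ Nat.card Γ) {H : Subgroup Γ} (hH : p ∣ Nat.card H) {g : Γ}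
    (hg : orderOf g = p) : ∃ k : Γ, k * g * k⁻¹ ∈ H := by
  obtain ⟨x, hx⟩ := exists_prime_orderOf_dvd_card' (G := H) p hH
  have hfac : (Nat.card Γ).factorization p = 1 := by
    have hp : p.Prime := Fact.out
    have h0 : Nat.card Γ ≠ 0 := Nat.card_pos.ne'
    refine le_antisymm ?_ ?_
    · by_contra! hlt
      exact hΓ ((hp.pow_dvd_iff_le_factorization h0).2 hlt)
    · rw [← hp.pow_dvd_iff_le_factorization h0, pow_one]
      exact hH.trans H.card_subgroup_dvd_card
  have hcard {y : Γ} (hy : orderOf y = p) :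
      Nat.card (Subgroup.zpowers y) = p ^ (Nat.card Γ).factorization p := by
    rw [Nat.card_zpowers, hy, hfac, pow_one]
  obtain ⟨k, hk⟩ := MulAction.exists_smul_eq Γ (Sylow.ofCard _ (hcard hg))
    (Sylow.ofCard _ (hcard ((Subgroup.orderOf_coe x).trans hx)))
  have hconj : MulAut.conj k • Subgroup.zpowers g = Subgroup.zpowers (x : Γ) :=
    congrArg Sylow.toSubgroup hk
  refine ⟨k, (Subgroup.zpowers_le.2 x.2 : Subgroup.zpowers (x : Γ) ≤ H) ?_⟩
  rw [← hconj]
  exact Subgroup.smul_mem_pointwise_smul _ (MulAut.conj k) _ (Subgroup.mem_zpowers g)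

end Sylow

section Substitution

lemma mem_stab {f : MvPolynomial (Fin 4) F2} {g : GL (Fin 4) F2} :
    g ∈ stab f ↔ act (g : Matrix (Fin 4) (Fin 4) F2) f = f := Iff.rfl

lemma eval_act (g : Matrix (Fin 4) (Fin 4) F2) (f : MvPolynomial (Fin 4) F2) (v : Fin 4 → F2) :
    eval v (act g f) = eval (g.mulVec v) f := by
  rw [act, ← coe_aeval_eq_eval, ← coe_aeval_eq_eval, RingHom.coe_coe, RingHom.coe_coe,
    comp_aeval_apply]
  simp only [map_sum, map_smul, aeval_X, smul_eq_mul]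
  rfl

lemma act_injective (k : GL (Fin 4) F2) : Function.Injective (act k) :=
  Function.LeftInverse.injective (g := act (k⁻¹ : GL (Fin 4) F2)) fun f => by
    rw [act_act, Units.mul_inv, act_one]

lemma isHomogeneous_act {f : MvPolynomial (Fin 4) F2} {n : ℕ} (hf : f.IsHomogeneous n)
    (g : Matrix (Fin 4) (Fin 4) F2) : (act g f).IsHomogeneous n := by
  simpa [act] using hf.aeval (fun i => ∑ j, g i j • (X j : MvPolynomial (Fin 4) F2)) fun i =>
    IsHomogeneous.sum _ _ 1 fun j _ => by
      rw [smul_eq_C_mul]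
      exact (isHomogeneous_X F2 j).C_mul _

lemma mem_stab_act {f : MvPolynomial (Fin 4) F2} {k g : GL (Fin 4) F2} :
    g ∈ stab (act k f) ↔ k * g * k⁻¹ ∈ stab f := by
  rw [mem_stab, mem_stab, ← (act_injective k).eq_iff (b := f), act_act, act_act,
    ← Units.val_mul, ← Units.val_mul, inv_mul_cancel_right]

lemma map_conj_stab_act (f : MvPolynomial (Fin 4) F2) (k : GL (Fin 4) F2) :
    (stab (act k f)).map (MulAut.conj k : GL (Fin 4) F2 →* GL (Fin 4) F2) = stab f := by
  ext g
  refine Subgroup.mem_map_equiv.trans ?_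
  rw [mem_stab_act]
  simp [mul_assoc]

/-- Conjugation by `k` identifies the stabilizers of two equivalent forms. -/
def stabActEquiv (f : MvPolynomial (Fin 4) F2) (k : GL (Fin 4) F2) :
    stab (act k f) ≃* stab f :=
  ((MulAut.conj k).subgroupMap _).trans (MulEquiv.subgroupCongr (map_conj_stab_act f k))

lemma act_frobeniusForm (h A : Matrix (Fin 4) (Fin 4) F2) :
    act h (frobeniusForm A) = frobeniusForm (h.transpose * A * h) := by
  have hfix : h.map (frobenius F2 2) = h := by
    ext i j
    simp [ZMod.frobenius_zmod]
  have := aeval_frobeniusForm h A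
  rwa [hfix] at this

lemma mem_stab_frobeniusForm {A : Matrix (Fin 4) (Fin 4) F2} {g : GL (Fin 4) F2} :
    g ∈ stab (frobeniusForm A) ↔ (g : Matrix (Fin 4) (Fin 4) F2).transpose * A * g = A := by
  rw [mem_stab, act_frobeniusForm, frobeniusForm_injective.eq_iff]

lemma card_GL_four_F2 : Nat.card (GL (Fin 4) F2) = 20160 := by
  rw [Matrix.card_GL_field]
  simp [Fin.prod_univ_four, ZMod.card]

end Substitution

section FiveCycle

/-- A matrix of order five in `GL₄(𝔽₂)`: the companion matrix of `T⁴ + T³ + T² + T + 1`. -/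
def fiveCycle : Matrix (Fin 4) (Fin 4) F2 :=
  !![0, 1, 0, 0; 0, 0, 1, 0; 0, 0, 0, 1; 1, 1, 1, 1]

/-- The Gram matrix of a nondegenerate alternating form preserved by `fiveCycle`. -/
def altGram : Matrix (Fin 4) (Fin 4) F2 :=
  Matrix.of fun i j => if i = j then 0 else 1

lemma fiveCycle_pow_five : fiveCycle ^ 5 = 1 := by decide +kernel

lemma fiveCycle_ne_one : fiveCycle ≠ 1 := by decide +kernel

/-- `fiveCycle` as an element of `GL₄(𝔽₂)`. -/
def fiveCycleUnit : GL (Fin 4) F2 :=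
  ⟨fiveCycle, fiveCycle ^ 4, by rw [← pow_succ', fiveCycle_pow_five],
    by rw [← pow_succ, fiveCycle_pow_five]⟩

lemma fiveCycleUnit_mem_stab {f : MvPolynomial (Fin 4) F2} :
    fiveCycleUnit ∈ stab f ↔ act fiveCycle f = f := Iff.rfl

lemma orderOf_fiveCycleUnit : orderOf fiveCycleUnit = 5 :=
  have : Fact (Nat.Prime 5) := ⟨by norm_num⟩
  orderOf_eq_prime (Units.ext fiveCycle_pow_five) fun h => fiveCycle_ne_one (congrArg Units.val h)

lemma eq_zero_of_fiveCycle_mulVec_eq_self :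
    ∀ {v : Fin 4 → F2}, fiveCycle.mulVec v = v → v = 0 := by
  decide +kernel

lemma altGram_mul_self : altGram * altGram = 1 := by decide +kernel

lemma fiveCycle_mul_altGram_mul_transpose :
    fiveCycle * altGram * fiveCycle.transpose = altGram := by
  decide +kernel

lemma sum_eval_smul_eq_zero_of_fiveCycle {f : MvPolynomial (Fin 4) F2}
    (hf : act fiveCycle f = f) : ∑ v : Fin 4 → F2, eval v f • v = 0 := by
  have hbij : Function.Bijective (fiveCycle.mulVec : (Fin 4 → F2) → Fin 4 → F2) :=
    Finite.injective_iff_bijective.1 (Matrix.mulVec_injective_of_isUnit fiveCycleUnit.isUnit)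
  refine eq_zero_of_fiveCycle_mulVec_eq_self ?_
  calc fiveCycle.mulVec (∑ v, eval v f • v)
      = ∑ v, eval (fiveCycle.mulVec v) f • fiveCycle.mulVec v := by
        simp only [← eval_act, hf, Matrix.mulVec_sum, Matrix.mulVec_smul]
    _ = ∑ v, eval v f • v := hbij.sum_comp fun v => eval v f • v

lemma coeff_eq_zero_of_fiveCycle {f : MvPolynomial (Fin 4) F2} (hhom : f.IsHomogeneous 3)
    (hf : act fiveCycle f = f) {d : Fin 4 →₀ ℕ} {l : Fin 4}
    (hd : d + Finsupp.single l 1 = Finsupp.equivFunOnFinite.symm fun _ => 1) :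
    coeff d f = 0 := by
  have hdeg : (f * X l).totalDegree ≤ (Fintype.card F2 - 1) * Fintype.card (Fin 4) := by
    simpa [ZMod.card] using (hhom.mul (isHomogeneous_X F2 l)).totalDegree_le
  have hsum := sum_eval_eq_neg_one_pow_mul_coeff (f * X l) hdeg
  simp only [ZMod.card, Nat.add_one_sub_one, ← hd, coeff_mul_X, Fintype.card_fin,
    Even.neg_one_pow (by decide : Even 4), one_mul] at hsum
  rw [← hsum]
  simpa using congrFun (sum_eval_smul_eq_zero_of_fiveCycle hf) l

lemma exists_eq_frobeniusForm_of_fiveCycle {f : MvPolynomial (Fin 4) F2}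
    (hhom : f.IsHomogeneous 3) (hf : act fiveCycle f = f) :
    ∃ A : Matrix (Fin 4) (Fin 4) F2, frobeniusForm A = f := by
  refine mem_range_frobeniusForm fun d hd => ?_
  have hdeg : d.degree = 3 := by
    by_contra hne
    exact mem_support_iff.1 hd (hhom.coeff_eq_zero hne)
  rcases exists_eq_single_add_single_two_or_add_single_eq_one hdeg (Fintype.card_fin 4) with
    hij | ⟨l, hl⟩
  · exact hij
  · exact absurd (coeff_eq_zero_of_fiveCycle hhom hf hl) (mem_support_iff.1 hd)

lemma commute_altGram_mul_of_fiveCycle {A : Matrix (Fin 4) (Fin 4) F2}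
    (hA : fiveCycle.transpose * A * fiveCycle = A) : Commute (altGram * A) fiveCycle := by
  calc altGram * A * fiveCycle
      = fiveCycle * altGram * (fiveCycle.transpose * A * fiveCycle) := by
        simp only [← mul_assoc, fiveCycle_mul_altGram_mul_transpose]
    _ = fiveCycle * (altGram * A) := by rw [hA, mul_assoc]

lemma exists_eq_frobeniusForm_altGram_mul {f : MvPolynomial (Fin 4) F2}
    (hhom : f.IsHomogeneous 3) (hf : act fiveCycle f = f) :
    ∃ B, Commute B fiveCycle ∧ f = frobeniusForm (altGram * B) := by
  obtain ⟨A, rfl⟩ := exists_eq_frobeniusForm_of_fiveCycle hhom hf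
  rw [act_frobeniusForm, frobeniusForm_injective.eq_iff] at hf
  refine ⟨altGram * A, commute_altGram_mul_of_fiveCycle hf, ?_⟩
  rw [← mul_assoc, altGram_mul_self, one_mul]

end FiveCycle

section Centralizer

variable {B : Matrix (Fin 4) (Fin 4) F2}

lemma row_eq_vecMul_pow_of_commute (hB : Commute B fiveCycle) (i : Fin 4) :
    B i = Matrix.vecMul (B 0) (fiveCycle ^ (i : ℕ)) := by
  have hrow : ∀ i : Fin 4, (fiveCycle ^ (i : ℕ)) 0 = Pi.single i 1 := by decide +kernel
  calc B i = (fiveCycle ^ (i : ℕ) * B) 0 := by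
        rw [Matrix.mul_apply_eq_vecMul, hrow, Matrix.single_one_vecMul, Matrix.row]
    _ = Matrix.vecMul (B 0) (fiveCycle ^ (i : ℕ)) := by
        rw [← (hB.pow_right _).eq, Matrix.mul_apply_eq_vecMul]

lemma card_le_sixteen_of_commute {H : Subgroup (GL (Fin 4) F2)}
    (hH : ∀ h ∈ H, Commute (h : Matrix (Fin 4) (Fin 4) F2) fiveCycle) : Nat.card H ≤ 16 := by
  have hinj : Function.Injective fun h : H => (h : GL (Fin 4) F2).val 0 := fun a b hab => by
    refine Subtype.ext (Units.ext (funext fun i => ?_))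
    rw [row_eq_vecMul_pow_of_commute (hH a a.2), row_eq_vecMul_pow_of_commute (hH b b.2)]
    exact congrArg (Matrix.vecMul · _) hab
  simpa using Nat.card_le_card_of_injective _ hinj

lemma eq_sum_smul_pow_of_commute (hB : Commute B fiveCycle) :
    B = ∑ i : Fin 4, B 0 i • fiveCycle ^ (i : ℕ) := by
  have hcomm : Commute (∑ i : Fin 4, B 0 i • fiveCycle ^ (i : ℕ)) fiveCycle :=
    Commute.sum_left _ _ _ fun i _ => ((Commute.refl fiveCycle).pow_left i).smul_left (B 0 i)
  have hrow : ∀ b : Fin 4 → F2, (∑ i : Fin 4, b i • fiveCycle ^ (i : ℕ)) 0 = b := by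
    decide +kernel
  refine funext fun i => ?_
  rw [row_eq_vecMul_pow_of_commute hcomm, hrow]
  exact row_eq_vecMul_pow_of_commute hB i

-- The centralizer of `fiveCycle` is a field with sixteen elements, in which the cube of a unit
-- is a fifth root of unity, hence a power of `fiveCycle`.
lemma cube_eq_pow_fiveCycle_of_commute (hB : Commute B fiveCycle) (h0 : B ≠ 0) :
    ∃ k : Fin 5, B ^ 3 = fiveCycle ^ (k : ℕ) := by
  have hcube : ∀ b : Fin 4 → F2, b ≠ 0 →
      ∃ k : Fin 5, (∑ i : Fin 4, b i • fiveCycle ^ (i : ℕ)) ^ 3 = fiveCycle ^ (k : ℕ) := by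
    decide +kernel
  rw [eq_sum_smul_pow_of_commute hB]
  refine hcube _ fun hb => h0 ?_
  rw [eq_sum_smul_pow_of_commute hB]
  simp [hb]

-- Since `fiveCycle` is an isometry, its adjoint is its inverse `fiveCycle ^ 4`, so on the
-- centralizer the adjoint is the Frobenius power `B ↦ B ^ 4`.
lemma transpose_mul_altGram_of_commute (hB : Commute B fiveCycle) :
    B.transpose * altGram = altGram * B ^ 4 := by
  have hadj : ∀ b : Fin 4 → F2,
      (∑ i : Fin 4, b i • fiveCycle ^ (i : ℕ)).transpose * altGram =
        altGram * (∑ i : Fin 4, b i • fiveCycle ^ (i : ℕ)) ^ 4 := by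
    decide +kernel
  rw [eq_sum_smul_pow_of_commute hB]
  exact hadj _

lemma commute_fiveCycle_of_commute_pow {h : Matrix (Fin 4) (Fin 4) F2} {k : Fin 5} (hk : k ≠ 0)
    (hcomm : Commute h (fiveCycle ^ (k : ℕ))) : Commute h fiveCycle := by
  have hgen : ∀ k : Fin 5, k ≠ 0 →
      ∃ m : Fin 5, (fiveCycle ^ (k : ℕ)) ^ (m : ℕ) = fiveCycle := by
    decide +kernel
  obtain ⟨m, hm⟩ := hgen k hk
  exact hm ▸ hcomm.pow_right m

end Centralizer

section Isometries

lemma commute_of_isometry {n R : Type*} [Fintype n] [DecidableEq n] [CommSemiring R]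
    {A D : Matrix n n R} {h : GL n R} (hA : IsUnit A) (hD : A.transpose = A * D)
    (hh : (h : Matrix n n R).transpose * A * h = A) : Commute (h : Matrix n n R) D := by
  have hhA : IsUnit ((h : Matrix n n R).transpose * A) :=
    ((Matrix.isUnit_transpose _).2 h.isUnit).mul hA
  have hhT : (h : Matrix n n R).transpose * A.transpose * h = A.transpose := by
    simpa [Matrix.transpose_mul, mul_assoc] using congrArg Matrix.transpose hh
  refine hhA.mul_left_cancel ?_
  calc (h : Matrix n n R).transpose * A * (h * D)
      = (h : Matrix n n R).transpose * A.transpose * h := by rw [← mul_assoc, hh, ← hD, hhT]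
    _ = (h : Matrix n n R).transpose * A * (D * h) := by rw [hD]; simp only [mul_assoc]

lemma transpose_altGram : altGram.transpose = altGram := by decide +kernel

lemma card_stab_le_sixteen {B : Matrix (Fin 4) (Fin 4) F2} (hB : Commute B fiveCycle)
    {k : Fin 5} (hk : k ≠ 0) (hcube : B ^ 3 = fiveCycle ^ (k : ℕ)) :
    Nat.card (stab (frobeniusForm (altGram * B))) ≤ 16 := by
  have hunit : IsUnit (altGram * B) := by
    refine (IsUnit.of_mul_eq_one _ altGram_mul_self).mul ((isUnit_pow_iff three_ne_zero).1 ?_)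
    rw [hcube]
    exact fiveCycleUnit.isUnit.pow _
  have htranspose : (altGram * B).transpose = altGram * B * fiveCycle ^ (k : ℕ) := by
    rw [Matrix.transpose_mul, transpose_altGram, transpose_mul_altGram_of_commute hB, ← hcube,
      mul_assoc, ← pow_succ']
  exact card_le_sixteen_of_commute fun h hh => commute_fiveCycle_of_commute_pow hk
    (commute_of_isometry hunit htranspose (mem_stab_frobeniusForm.1 hh))

lemma exists_act_frobeniusForm_altGram {B : Matrix (Fin 4) (Fin 4) F2}
    (hB : Commute B fiveCycle) (hcube : B ^ 3 = 1) :
    ∃ k : GL (Fin 4) F2,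
      frobeniusForm (altGram * B) = act k (frobeniusForm altGram) := by
  have hpow : (B ^ 2) ^ 4 * B ^ 2 = B := by
    calc (B ^ 2) ^ 4 * B ^ 2 = (B ^ 3) ^ 3 * B := by
          rw [← pow_mul, ← pow_mul, ← pow_add, ← pow_succ]
      _ = B := by rw [hcube, one_pow, one_mul]
  refine ⟨Units.ofPowEqOne B 3 hcube three_ne_zero ^ 2, ?_⟩
  rw [act_frobeniusForm, Units.val_pow_eq_pow_val, Units.val_ofPowEqOne,
    transpose_mul_altGram_of_commute (hB.pow_left 2), mul_assoc, hpow]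

end Isometries

section SixPoints

/-- The images of the six standard basis vectors of `𝔽₂⁶` in `𝔽₂⁴`. Differences of these points
identify the sum-zero vectors of `𝔽₂⁶` modulo the all-one vector with `𝔽₂⁴`, and so transport
the permutation representation of `S₆` to it. -/
def sixPoint : Fin 6 → Fin 4 → F2 :=
  ![Pi.single 0 1, Pi.single 1 1, Pi.single 2 1, Pi.single 3 1, 0, 1]

/-- The matrix of `σ` in the representation of `S₆` on `𝔽₂⁴`, sending each
`sixPoint a - sixPoint 4` to `sixPoint (σ a) - sixPoint (σ 4)`. -/
def permSixMatrix (σ : Equiv.Perm (Fin 6)) : Matrix (Fin 4) (Fin 4) F2 :=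
  Matrix.of fun i j => (sixPoint (σ j.castSucc.castSucc) + sixPoint (σ 4)) i

lemma permSixMatrix_transpose_apply (σ : Equiv.Perm (Fin 6)) (j : Fin 4) :
    (permSixMatrix σ).transpose j = sixPoint (σ j.castSucc.castSucc) + sixPoint (σ 4) := rfl

lemma sum_sixPoint : ∑ a, sixPoint a = 0 := by decide +kernel

lemma sixPoint_castSucc_castSucc : ∀ j : Fin 4, sixPoint j.castSucc.castSucc = Pi.single j 1 := by
  decide +kernel

lemma permSixMatrix_mulVec_sixPoint (σ : Equiv.Perm (Fin 6)) (a : Fin 6) :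
    (permSixMatrix σ).mulVec (sixPoint a) = sixPoint (σ a) + sixPoint (σ 4) := by
  have hbasis (j : Fin 4) : (permSixMatrix σ).mulVec (sixPoint j.castSucc.castSucc) =
      sixPoint (σ j.castSucc.castSucc) + sixPoint (σ 4) := by
    rw [sixPoint_castSucc_castSucc, Matrix.mulVec_single_one]
    rfl
  have hfour : (permSixMatrix σ).mulVec (sixPoint 4) = sixPoint (σ 4) + sixPoint (σ 4) := by
    rw [CharTwo.add_self_eq_zero]
    exact Matrix.mulVec_zero _
  have hne : ∀ b ≠ 5, (permSixMatrix σ).mulVec (sixPoint b) = sixPoint (σ b) + sixPoint (σ 4) := by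
    intro b hb
    fin_cases b
    exacts [hbasis 0, hbasis 1, hbasis 2, hbasis 3, hfour, absurd rfl hb]
  have hmul : ∑ b, (permSixMatrix σ).mulVec (sixPoint b) = 0 := by
    rw [← Matrix.mulVec_sum, sum_sixPoint, Matrix.mulVec_zero]
  have hsum : ∑ b, (sixPoint (σ b) + sixPoint (σ 4)) = 0 := by
    rw [Finset.sum_add_distrib, Equiv.sum_comp σ sixPoint, sum_sixPoint]
    ext i
    simp [show (6 : F2) = 0 from rfl]
  by_cases ha : a = 5
  · subst ha
    rw [← CharTwo.add_eq_zero, ← Fintype.sum_eq_single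
      (f := fun b => (permSixMatrix σ).mulVec (sixPoint b) + (sixPoint (σ b) + sixPoint (σ 4))) 5
      fun b hb => CharTwo.add_eq_zero.2 (hne b hb), Finset.sum_add_distrib, hmul, hsum, add_zero]
  · exact hne a ha

lemma permSixMatrix_one : permSixMatrix 1 = 1 := by decide +kernel

lemma permSixMatrix_mul (σ τ : Equiv.Perm (Fin 6)) :
    permSixMatrix (σ * τ) = permSixMatrix σ * permSixMatrix τ := by
  refine Matrix.transpose_injective (funext fun j => ?_)
  calc (permSixMatrix (σ * τ)).transpose j
      = (permSixMatrix σ).mulVec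
          (sixPoint (τ j.castSucc.castSucc) + sixPoint (τ 4)) := by
        rw [Matrix.mulVec_add, permSixMatrix_mulVec_sixPoint, permSixMatrix_mulVec_sixPoint,
          add_add_add_comm, CharTwo.add_self_eq_zero, add_zero]
        rfl
    _ = (permSixMatrix σ * permSixMatrix τ).transpose j := rfl

lemma sixPoint_add_dotProduct_altGram : ∀ {a b c : Fin 6}, a ≠ c → b ≠ c →
    (sixPoint a + sixPoint c) ⬝ᵥ altGram.mulVec (sixPoint b + sixPoint c) =
      if a = b then 0 else 1 := by
  decide +kernel

lemma permSixMatrix_isometry (σ : Equiv.Perm (Fin 6)) :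
    (permSixMatrix σ).transpose * altGram * permSixMatrix σ = altGram := by
  have hne (j : Fin 4) : σ j.castSucc.castSucc ≠ σ 4 := by
    rw [σ.injective.ne_iff]
    revert j
    decide
  ext i j
  rw [Matrix.mul_mul_apply, permSixMatrix_transpose_apply, permSixMatrix_transpose_apply,
    sixPoint_add_dotProduct_altGram (hne i) (hne j)]
  simp [altGram]

lemma eq_or_eq_of_sixPoint_add_eq : ∀ {a b c d : Fin 6}, a ≠ b →
    sixPoint c + sixPoint d = sixPoint a + sixPoint b → c = a ∨ c = b := by
  decide +kernel

lemma eq_one_of_permSixMatrix_eq_one {σ : Equiv.Perm (Fin 6)} (hσ : permSixMatrix σ = 1) :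
    σ = 1 := by
  have hpair {a b : Fin 6} (hab : a ≠ b) : σ a = a ∨ σ a = b := by
    refine eq_or_eq_of_sixPoint_add_eq (d := σ b) hab ?_
    have h := permSixMatrix_mulVec_sixPoint σ
    simp only [hσ, Matrix.one_mulVec] at h
    rw [h a, h b, add_add_add_comm, CharTwo.add_self_eq_zero, add_zero]
  have hthree : ∀ a : Fin 6, ∃ b c, a ≠ b ∧ a ≠ c ∧ b ≠ c := by decide
  ext1 a
  obtain ⟨b, c, hab, hac, hbc⟩ := hthree a
  rcases hpair hab with ha | hb
  · exact ha
  · exact (hpair hac).resolve_right fun hc => hbc (hb.symm.trans hc)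

/-- The representation of `S₆` on `𝔽₂⁴` by isometries of the form with Gram matrix `altGram`,
with values in the stabilizer of the associated Frobenius form. -/
def permSixHom : Equiv.Perm (Fin 6) →* stab (frobeniusForm altGram) :=
  (MonoidHom.toHomUnits
    { toFun := permSixMatrix
      map_one' := permSixMatrix_one
      map_mul' := permSixMatrix_mul }).codRestrict _ fun σ =>
        mem_stab_frobeniusForm.2 (permSixMatrix_isometry σ)

lemma permSixHom_injective : Function.Injective permSixHom :=
  (injective_iff_map_eq_one _).2 fun _ hσ => eq_one_of_permSixMatrix_eq_one
    (congrArg (fun g : stab (frobeniusForm altGram) => (g : GL (Fin 4) F2).val) hσ)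

lemma nonempty_stab_altGram_mulEquiv_perm
    (h : Nat.card (stab (frobeniusForm altGram)) = 720) :
    Nonempty (stab (frobeniusForm altGram) ≃* Equiv.Perm (Fin 6)) := by
  have hcard : Nat.card (Equiv.Perm (Fin 6)) = Nat.card (stab (frobeniusForm altGram)) := by
    rw [h, Nat.card_perm, Nat.card_fin]
    rfl
  exact ⟨(MulEquiv.ofBijective permSixHom
    ((Nat.bijective_iff_injective_and_card _).2 ⟨permSixHom_injective, hcard⟩)).symm⟩

end SixPoints

lemma nonempty_stab_mulEquiv_perm_of_fiveCycle {f : MvPolynomial (Fin 4) F2}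
    (hhom : f.IsHomogeneous 3) (hf : act fiveCycle f = f) (h : Nat.card (stab f) = 720) :
    Nonempty (stab f ≃* Equiv.Perm (Fin 6)) := by
  obtain ⟨B, hB, rfl⟩ := exists_eq_frobeniusForm_altGram_mul hhom hf
  have hB0 : B ≠ 0 := by
    rintro rfl
    have htop : stab (frobeniusForm (altGram * 0)) = ⊤ :=
      eq_top_iff.2 fun g _ => mem_stab_frobeniusForm.2 (by simp)
    rw [htop, Subgroup.card_top, card_GL_four_F2] at h
    norm_num at h
  obtain ⟨k, hk⟩ := cube_eq_pow_fiveCycle_of_commute hB hB0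
  have hk0 : k = 0 := by
    by_contra hne
    have hle := card_stab_le_sixteen hB hne hk
    omega
  obtain ⟨g, hg⟩ := exists_act_frobeniusForm_altGram hB (by simpa [hk0] using hk)
  rw [hg] at h ⊢
  let e := stabActEquiv (frobeniusForm altGram) g
  obtain ⟨φ⟩ := nonempty_stab_altGram_mulEquiv_perm ((Nat.card_congr e.toEquiv).symm.trans h)
  exact ⟨e.trans φ⟩

theorem stab_card_eq_720_iso_S6_general (f : MvPolynomial (Fin 4) F2) (hf : f.IsHomogeneous 3)
    (h : Nat.card (stab f) = 720) :
    Nonempty (stab f ≃* Equiv.Perm (Fin 6)) := by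
  have : Fact (Nat.Prime 5) := ⟨by norm_num⟩
  have hGL : ¬ 5 ^ 2 ∣ Nat.card (GL (Fin 4) F2) := by
    rw [card_GL_four_F2]
    norm_num
  have hstab : 5 ∣ Nat.card (stab f) := by
    rw [h]
    norm_num
  obtain ⟨k, hk⟩ := exists_conj_mem_of_prime_dvd_card hGL hstab orderOf_fiveCycleUnit
  have hfix : act fiveCycle (act k f) = act k f := fiveCycleUnit_mem_stab.1 (mem_stab_act.2 hk)
  have e := stabActEquiv f k
  have hcard : Nat.card (stab (act k f)) = 720 := (Nat.card_congr e.toEquiv).trans h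
  obtain ⟨φ⟩ := nonempty_stab_mulEquiv_perm_of_fiveCycle (isHomogeneous_act hf k) hfix hcard
  exact ⟨e.symm.trans φ⟩

/-- if the stabilizer of a smooth cubic form over `𝔽₂` has order exactly `720`,
then it is isomorphic to the symmetric group `S₆`. -/
theorem stab_card_eq_720_iso_S6 (f : MvPolynomial (Fin 4) F2) (hf : IsSmoothCubic f)
    (h : Nat.card (stab f) = 720) :
    Nonempty (stab f ≃* Equiv.Perm (Fin 6)) :=
  stab_card_eq_720_iso_S6_general f hf.1 h
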